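/- arXiv:1405.7849 — 3 statements merged into one kernel-verified Lean document; each statement's English description precedes it below -/
import Mathlib

section
/- For every integer k ≥ 0, there are infinitely many n such that every deterministic OBDD on n variables computing the partial function PartialMOD^k_n has width at least 2^{k+1}. -/
/-- Number of 1s in a binary string ν ∈ {0,1}^n. -/
def countOnes {n : ℕ} (ν : Fin n → Bool) : ℕ :=
  (Finset.univ.filter (fun i => ν i = true)).card

/-- Number of 0s in a binary string ν ∈ {0,1}^n. -/
def countZeros {n : ℕ} (ν : Fin n → Bool) : ℕ :=
  (Finset.univ.filter (fun i => ν i = false)).card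

/-- Number of 1s among the first `k` bits. -/
def countOnesFirst (k : ℕ) {n : ℕ} (ν : Fin n → Bool) : ℕ :=
  (Finset.univ.filter (fun i : Fin n => (i : ℕ) < k ∧ ν i = true)).card

/-- Number of 0s among the first `k` bits. -/
def countZerosFirst (k : ℕ) {n : ℕ} (ν : Fin n → Bool) : ℕ :=
  (Finset.univ.filter (fun i : Fin n => (i : ℕ) < k ∧ ν i = false)).card

/-- A deterministic OBDD of width `d` on `n` Boolean variables. -/
structure DOBDD (n d : ℕ) where
  ord : Equiv.Perm (Fin n)
  T : Fin n → Bool → Fin d → Fin d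
  start : Fin d
  Accept : Finset (Fin d)

/-- The node reached by a deterministic OBDD after reading all input bits. -/
def DOBDD.run {n d : ℕ} (M : DOBDD n d) (ν : Fin n → Bool) : Fin d :=
  (List.finRange n).foldl (fun v j => M.T j (ν (M.ord j)) v) M.start

def DOBDD.accepts {n d : ℕ} (M : DOBDD n d) (ν : Fin n → Bool) : Prop :=
  M.run ν ∈ M.Accept

/-- A deterministic OBDD computes a total Boolean function. -/
def DOBDD.computes {n d : ℕ} (M : DOBDD n d) (f : (Fin n → Bool) → Bool) : Prop :=
  ∀ ν, M.accepts ν ↔ f ν = true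

/-- A nondeterministic OBDD of width `d` on `n` Boolean variables. -/
structure NOBDD (n d : ℕ) where
  ord : Equiv.Perm (Fin n)
  T : Fin n → Bool → Fin d → Set (Fin d)
  start : Fin d
  Accept : Finset (Fin d)

/-- The set of nodes reachable by a nondeterministic OBDD after reading all input bits. -/
def NOBDD.reach {n d : ℕ} (M : NOBDD n d) (ν : Fin n → Bool) : Set (Fin d) :=
  (List.finRange n).foldl (fun S j => {w | ∃ v ∈ S, w ∈ M.T j (ν (M.ord j)) v}) {M.start}

def NOBDD.accepts {n d : ℕ} (M : NOBDD n d) (ν : Fin n → Bool) : Prop :=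
  ∃ v ∈ M.reach ν, v ∈ M.Accept

/-- A nondeterministic OBDD computes a total Boolean function. -/
def NOBDD.computes {n d : ℕ} (M : NOBDD n d) (f : (Fin n → Bool) → Bool) : Prop :=
  ∀ ν, M.accepts ν ↔ f ν = true

/-- The class of Boolean functions on n variables computed by deterministic
OBDDs of width at most `w`. -/
def OBDDclass (n w : ℕ) : Set ((Fin n → Bool) → Bool) :=
  {f | ∃ d, d ≤ w ∧ ∃ M : DOBDD n d, M.computes f}

/-- The class of Boolean functions on n variables computed by nondeterministic
OBDDs of width at most `w`. -/
def NOBDDclass (n w : ℕ) : Set ((Fin n → Bool) → Bool) :=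
  {f | ∃ d, d ≤ w ∧ ∃ M : NOBDD n d, M.computes f}

/-- Final probability distribution of a stable probabilistic OBDD given by the pair of
left-stochastic matrices `A`, variable order `ord`, and initial node `s`. -/
noncomputable def stableProbRun {n d : ℕ} (A : Bool → Matrix (Fin d) (Fin d) ℝ)
    (ord : Equiv.Perm (Fin n)) (s : Fin d) (ν : Fin n → Bool) : Fin d → ℝ :=
  (List.finRange n).foldl (fun v j => (A (ν (ord j))).mulVec v)
    (fun i => if i = s then 1 else 0)

/-- Final quantum state of a stable ID quantum OBDD given by the pair of matrices `U`
and the initial computational-basis state `q0`, reading bits in the natural order. -/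
noncomputable def quantumRunStable {n d : ℕ} (U : Bool → Matrix (Fin d) (Fin d) ℂ) (q0 : Fin d)
    (ν : Fin n → Bool) : Fin d → ℂ :=
  (List.finRange n).foldl (fun ψ j => (U (ν j)).mulVec ψ)
    (fun i => if i = q0 then 1 else 0)

/-- A quantum OBDD of width `d` on `n` Boolean variables. -/
structure QOBDD (n d : ℕ) where
  ord : Equiv.Perm (Fin n)
  U : Fin n → Bool → Matrix (Fin d) (Fin d) ℂ
  unitary : ∀ j b, U j b ∈ Matrix.unitaryGroup (Fin d) ℂ
  q0 : Fin d
  Accept : Finset (Fin d)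

/-- The final state of a quantum OBDD on input ν. -/
noncomputable def QOBDD.finalState {n d : ℕ} (M : QOBDD n d) (ν : Fin n → Bool) : Fin d → ℂ :=
  (List.finRange n).foldl (fun ψ j => (M.U j (ν (M.ord j))).mulVec ψ)
    (fun i => if i = M.q0 then 1 else 0)

/-- The acceptance probability of a quantum OBDD on input ν. -/
noncomputable def QOBDD.acceptProb {n d : ℕ} (M : QOBDD n d) (ν : Fin n → Bool) : ℝ :=
  ∑ i ∈ M.Accept, Complex.normSq (M.finalState ν i)

/-- `NotO_n(ν) = 0` iff `#0(ν) = #1(ν)`. -/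
def NotO (n : ℕ) (ν : Fin n → Bool) : Bool := !decide (countZeros ν = countOnes ν)

/-- `NotSQUARE_n(ν) = 0` iff `(#0(ν))² = #1(ν)`. -/
def NotSQUARE (n : ℕ) (ν : Fin n → Bool) : Bool := !decide ((countZeros ν) ^ 2 = countOnes ν)

/-- `NotPOWER_n(ν) = 0` iff `2^{#0(ν)} = #1(ν)`. -/
def NotPOWER (n : ℕ) (ν : Fin n → Bool) : Bool := !decide (2 ^ (countZeros ν) = countOnes ν)

/-- `MOD^k_n(ν) = 1` iff `#1(ν) ≡ 0 (mod k)`. -/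
def MODf (n k : ℕ) (ν : Fin n → Bool) : Bool := decide (countOnes ν % k = 0)

/-- `NotO^k_n(ν) = 0` iff `#^k_0(ν) = #^k_1(ν) = k/2`. -/
def NotOk (n k : ℕ) (ν : Fin n → Bool) : Bool :=
  !decide (countZerosFirst k ν = k / 2 ∧ countOnesFirst k ν = k / 2)

/-- The ordered subsequence of value bits `ν_{2i}` (1-indexed, `1 ≤ i ≤ k/2`) whose
marker bit `ν_{2i-1}` equals `b`; `b = false` gives `α(ν)` and `b = true` gives `β(ν)`. -/
def valueSubseq {n : ℕ} (k : ℕ) (b : Bool) (ν : Fin n → Bool) : List Bool :=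
  (List.range (k / 2)).filterMap (fun j =>
    if h : 2 * j + 1 < n then
      if ν ⟨2 * j, by omega⟩ = b then some (ν ⟨2 * j + 1, h⟩) else none
    else none)

/-- `EQS^k_n(ν) = 1` iff `α(ν) = β(ν)`. -/
def EQS (n k : ℕ) (ν : Fin n → Bool) : Bool :=
  decide (valueSubseq k false ν = valueSubseq k true ν)

/-- `NotEQS^k_n(ν) = 1 - EQS^k_n(ν)`. -/
def NotEQS (n k : ℕ) (ν : Fin n → Bool) : Bool := !(EQS n k ν)

/-- Reachability: node `v` is reached at level `j` by a word with `c` ones. -/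
inductive PReach {d : ℕ} (T : ℕ → Bool → Fin d → Fin d) (s : Fin d) : ℕ → Fin d → ℕ → Prop
  | zero : PReach T s 0 s 0
  | step {j : ℕ} {v : Fin d} {c : ℕ} (b : Bool) :
      PReach T s j v c → PReach T s (j + 1) (T j b v) (c + b.toNat)

lemma PReach.shift {d : ℕ} (T : ℕ → Bool → Fin d → Fin d) (s : Fin d) (j : ℕ) (v : Fin d)
    (l : ℕ) : ∀ i, i ≤ l → ∃ v', ∀ c, PReach T s j v c → PReach T s (j + l) v' (c + i) := by
  induction l with
  | zero =>
    intro i hi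
    obtain rfl : i = 0 := by omega
    exact ⟨v, fun c h => h⟩
  | succ l ih =>
    intro i hi
    rcases Nat.lt_or_ge l i with h | h
    · obtain ⟨v', hv'⟩ := ih (i - 1) (by omega)
      refine ⟨T (j + l) true v', fun c hc => ?_⟩
      have := PReach.step true (hv' c hc)
      have e : c + (i - 1) + true.toNat = c + i := by simp; omega
      rw [e] at this
      exact this
    · obtain ⟨v', hv'⟩ := ih i h
      refine ⟨T (j + l) false v', fun c hc => ?_⟩
      exact PReach.step false (hv' c hc)

/-- State after `j` steps. -/
def pstate {d : ℕ} (T : ℕ → Bool → Fin d → Fin d) (s : Fin d) (μ : ℕ → Bool) : ℕ → Fin d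
  | 0 => s
  | j + 1 => T j (μ j) (pstate T s μ j)

lemma pstate_congr {d : ℕ} (T : ℕ → Bool → Fin d → Fin d) (s : Fin d) (μ μ' : ℕ → Bool) (j : ℕ)
    (h : ∀ i < j, μ i = μ' i) : pstate T s μ j = pstate T s μ' j := by
  induction j with
  | zero => rfl
  | succ j ih =>
    simp only [pstate]
    rw [ih (fun i hi => h i (by omega)), h j (by omega)]

lemma PReach.exists_word {d : ℕ} {T : ℕ → Bool → Fin d → Fin d} {s : Fin d} {j : ℕ} {v : Fin d}
    {c : ℕ} (h : PReach T s j v c) :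
    ∃ μ : ℕ → Bool, pstate T s μ j = v ∧ ∑ i ∈ Finset.range j, (μ i).toNat = c := by
  induction h with
  | zero => exact ⟨fun _ => false, rfl, rfl⟩
  | @step j v c b _ ih =>
    obtain ⟨μ, h1, h2⟩ := ih
    have hne : ∀ i < j, Function.update μ j b i = μ i := fun i hi =>
      Function.update_of_ne (by omega) _ _
    refine ⟨Function.update μ j b, ?_, ?_⟩
    · simp only [pstate, Function.update_self]
      rw [pstate_congr T s _ μ j hne, h1]
    · rw [Finset.sum_range_succ, Function.update_self, ← h2]
      congr 1
      exact Finset.sum_congr rfl (fun i hi => by rw [hne i (Finset.mem_range.1 hi)])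

lemma foldl_pstate {d : ℕ} (T : ℕ → Bool → Fin d → Fin d) (s : Fin d) (μ : ℕ → Bool) (n : ℕ) :
    (List.finRange n).foldl (fun v (j : Fin n) => T j (μ j) v) s = pstate T s μ n := by
  induction n with
  | zero => simp [pstate]
  | succ n ih =>
    rw [List.finRange_succ_last, List.foldl_append, List.foldl_map]
    simp only [Fin.val_castSucc, List.foldl_cons, List.foldl_nil, Fin.val_last, pstate]
    rw [ih]

lemma exists_mul_mod (k i : ℕ) (h0 : 0 < i) (h1 : i < 2 ^ (k + 1)) :
    ∃ t w, t * i = 2 ^ k + 2 ^ (k + 1) * w := by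
  obtain ⟨e, u, ⟨w, rfl⟩, rfl⟩ := Nat.exists_eq_two_pow_mul_odd h0.ne'
  have he : e < k + 1 := by
    refine (Nat.pow_lt_pow_iff_right (a := 2) (by norm_num)).1 (lt_of_le_of_lt ?_ h1)
    exact Nat.le_mul_of_pos_right _ (by omega)
  refine ⟨2 ^ (k - e), w, ?_⟩
  rw [← mul_assoc, ← pow_add, Nat.sub_add_cancel (by omega)]
  ring

/-- The abstract combinatorial core. -/
lemma pmod_core (k d n : ℕ) (T : ℕ → Bool → Fin d → Fin d) (s : Fin d)
    (hn : 2 ^ (k + 1) * (2 ^ (k + 1) + 1) + 2 ^ (k + 1) ≤ n)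
    (H : ∀ v c c', PReach T s n v c → PReach T s n v c' → c % 2 ^ (k + 1) = 0 →
      c' % 2 ^ (k + 1) = 2 ^ k → False) : 2 ^ (k + 1) ≤ d := by
  classical
  set m := 2 ^ (k + 1) with hm
  have hmpos : 0 < m := by positivity
  have hkm : 2 ^ k < m := Nat.pow_lt_pow_right (by norm_num) (by omega)
  have : NeZero m := ⟨hmpos.ne'⟩
  let F : ℕ → Fin d → Finset (ZMod m) := fun j v =>
    Finset.univ.filter (fun r => ∃ c : ℕ, PReach T s j v c ∧ (c : ZMod m) = r)
  have hF : ∀ j v r, r ∈ F j v ↔ ∃ c : ℕ, PReach T s j v c ∧ (c : ZMod m) = r := by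
    intro j v r; simp [F]
  have hanti : ∀ j v r, j + m ≤ n → r ∈ F j v → r + ((2 ^ k : ℕ) : ZMod m) ∈ F j v → False := by
    intro j v r hj h1 h2
    obtain ⟨c, hc, hcr⟩ := (hF _ _ _).1 h1
    obtain ⟨c', hc', hcr'⟩ := (hF _ _ _).1 h2
    have hlt := ZMod.val_lt (-r)
    obtain ⟨v', hv'⟩ := PReach.shift T s j v (n - j) (-r).val (by omega)
    have e : j + (n - j) = n := by omega
    rw [e] at hv'
    refine H v' _ _ (hv' c hc) (hv' c' hc') ?_ ?_
    · rw [← Nat.dvd_iff_mod_eq_zero, ← ZMod.natCast_eq_zero_iff]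
      simp [hcr]
    · have : ((c' + (-r).val : ℕ) : ZMod m) = ((2 ^ k : ℕ) : ZMod m) := by
        rw [Nat.cast_add, hcr', ZMod.natCast_zmod_val]; ring
      rw [ZMod.natCast_eq_natCast_iff'] at this
      rw [this, Nat.mod_eq_of_lt hkm]
  have hshift : ∀ (j : ℕ) (v : Fin d) (l i : ℕ), i ≤ l →
      ∃ v', (F j v).image (fun r => r + (i : ZMod m)) ⊆ F (j + l) v' := by
    intro j v l i hi
    obtain ⟨v', hv'⟩ := PReach.shift T s j v l i hi
    refine ⟨v', ?_⟩
    intro x hx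
    obtain ⟨r, hr, rfl⟩ := Finset.mem_image.1 hx
    obtain ⟨c, hc, hcr⟩ := (hF _ _ _).1 hr
    exact (hF _ _ _).2 ⟨c + i, hv' c hc, by push_cast; rw [hcr]⟩
  have hcard : ∀ (S : Finset (ZMod m)) (a : ZMod m), (S.image (fun r => r + a)).card = S.card :=
    fun S a => Finset.card_image_of_injective _ (add_left_injective a)
  let φ : ℕ → ℕ := fun j => Finset.univ.sup (fun v => (F j v).card)
  have hφle : ∀ j v, (F j v).card ≤ φ j := fun j v =>
    Finset.le_sup (f := fun v => (F j v).card) (Finset.mem_univ v)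
  have hφm : ∀ j, φ j ≤ m := by
    intro j
    refine Finset.sup_le (fun v _ => ?_)
    exact (Finset.card_le_univ _).trans (ZMod.card m).le
  have hφ0 : 1 ≤ φ 0 := by
    refine le_trans ?_ (hφle 0 s)
    exact Finset.card_pos.2 ⟨0, (hF _ _ _).2 ⟨0, PReach.zero, by simp⟩⟩
  have hφmono : ∀ j l, φ j ≤ φ (j + l) := by
    intro j l
    refine Finset.sup_le (fun v _ => ?_)
    obtain ⟨v', hv'⟩ := hshift j v l 0 (by omega)
    have := Finset.card_le_card hv'
    rw [hcard] at this
    exact this.trans (hφle _ _)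
  have hstab : ∃ i, i ≤ m ∧ φ (m * i) = φ (m * i + m) := by
    by_contra! hcon
    have : ∀ i, i ≤ m + 1 → i + 1 ≤ φ (m * i) := by
      intro i
      induction i with
      | zero => intro _; simpa using hφ0
      | succ i ih =>
        intro hi
        have h1 := ih (by omega)
        have h2 := hcon i (by omega)
        have h3 := hφmono (m * i) m
        rw [mul_add, mul_one]
        omega
    have h1 := this (m + 1) le_rfl
    have h2 := hφm (m * (m + 1))
    omega
  obtain ⟨i₀, hi₀, hst⟩ := hstab
  set j := m * i₀ with hj
  have hjn : j + m ≤ n := by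
    have : m * i₀ ≤ m * (m + 1) := Nat.mul_le_mul_left _ (by omega)
    omega
  obtain ⟨v, -, hv⟩ := Finset.exists_mem_eq_sup Finset.univ ⟨s, Finset.mem_univ s⟩
    (fun v => (F j v).card)
  have hv : φ j = (F j v).card := hv
  have hpos : 0 < (F j v).card := by
    have := hφmono 0 j
    rw [zero_add] at this
    omega
  obtain ⟨r, hr⟩ := Finset.card_pos.1 hpos
  have hex : ∀ i : Fin m, ∃ v',
      (F j v).image (fun r => r + ((i : ℕ) : ZMod m)) = F (j + m) v' := by
    intro i
    obtain ⟨v', hv'⟩ := hshift j v m i i.2.le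
    refine ⟨v', Finset.eq_of_subset_of_card_le hv' ?_⟩
    rw [hcard, ← hv, hst]
    exact hφle _ _
  choose g hg using hex
  have key : ∀ a b : Fin m, a < b → g a ≠ g b := by
    intro a b hab hgab
    have hS : (F j v).image (fun r => r + ((a : ℕ) : ZMod m))
        = (F j v).image (fun r => r + ((b : ℕ) : ZMod m)) := by rw [hg, hg, hgab]
    have hab' : (a : ℕ) < b := hab
    have hstep : ∀ x ∈ F j v, x + (((b : ℕ) - (a : ℕ) : ℕ) : ZMod m) ∈ F j v := by
      intro x hx
      have : x + ((b : ℕ) : ZMod m) ∈ (F j v).image (fun r => r + ((a : ℕ) : ZMod m)) := by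
        rw [hS]; exact Finset.mem_image_of_mem _ hx
      obtain ⟨y, hy, hyx⟩ := Finset.mem_image.1 this
      have : x + (((b : ℕ) - (a : ℕ) : ℕ) : ZMod m) = y := by
        rw [Nat.cast_sub hab'.le]
        linear_combination -hyx
      rw [this]; exact hy
    have hmul : ∀ t : ℕ, r + ((t * ((b : ℕ) - (a : ℕ)) : ℕ) : ZMod m) ∈ F j v := by
      intro t
      induction t with
      | zero => simpa using hr
      | succ t ih =>
        have := hstep _ ih
        rw [add_assoc, ← Nat.cast_add] at this
        rw [Nat.succ_mul]; exact this
    obtain ⟨t, w, htw⟩ := exists_mul_mod k ((b : ℕ) - a) (by omega) (by have := b.2; omega)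
    have h2 := hmul t
    rw [htw, Nat.cast_add, Nat.cast_mul, ← hm, ZMod.natCast_self, zero_mul, add_zero] at h2
    exact hanti j v r hjn hr h2
  have hinj : Function.Injective g := by
    intro a b hab
    by_contra hne
    rcases lt_or_gt_of_ne hne with h | h
    · exact key a b h hab
    · exact key b a h hab.symm
  simpa using Fintype.card_le_of_injective g hinj

lemma countOnes_perm {n : ℕ} (σ : Equiv.Perm (Fin n)) (μ : ℕ → Bool) :
    countOnes (fun i => μ (σ.symm i)) = ∑ i ∈ Finset.range n, (μ i).toNat := by
  unfold countOnes
  rw [Finset.card_filter, ← Fin.sum_univ_eq_sum_range (fun i => (μ i).toNat) n]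
  rw [← Equiv.sum_comp σ]
  refine Finset.sum_congr rfl (fun i _ => ?_)
  simp only [Equiv.symm_apply_apply]
  cases μ i <;> simp

/-- For every `k ≥ 0`, there are infinitely many `n` such that any deterministic OBDD
computing the partial function `PartialMOD^k_n` has width at least `2^{k+1}`. -/
theorem partialMOD_deterministic_lower_bound (k : ℕ) :
    ∀ N : ℕ, ∃ n, N ≤ n ∧
      ∀ (d : ℕ) (M : DOBDD n d),
        (∀ ν : Fin n → Bool,
          (countOnes ν % 2 ^ (k + 1) = 0 → M.accepts ν) ∧
          (countOnes ν % 2 ^ (k + 1) = 2 ^ k → ¬ M.accepts ν)) →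
        2 ^ (k + 1) ≤ d := by
  intro N
  refine ⟨N + (2 ^ (k + 1) * (2 ^ (k + 1) + 1) + 2 ^ (k + 1)), Nat.le_add_right _ _, ?_⟩
  generalize hn : N + (2 ^ (k + 1) * (2 ^ (k + 1) + 1) + 2 ^ (k + 1)) = n
  intro d M hM
  let T : ℕ → Bool → Fin d → Fin d := fun j b v => if h : j < n then M.T ⟨j, h⟩ b v else v
  have hrun : ∀ μ : ℕ → Bool,
      M.run (fun i => μ (M.ord.symm i)) = pstate T M.start μ n := by
    intro μ
    rw [← foldl_pstate]
    unfold DOBDD.run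
    simp [T]
  refine pmod_core k d n T M.start (hn ▸ Nat.le_add_left _ _) ?_
  intro v c c' h h' hc hc'
  obtain ⟨μ, h1, h2⟩ := h.exists_word
  obtain ⟨μ', h1', h2'⟩ := h'.exists_word
  have a1 := (hM (fun i => μ (M.ord.symm i))).1 (by rw [countOnes_perm, h2, hc])
  have a2 := (hM (fun i => μ' (M.ord.symm i))).2 (by rw [countOnes_perm, h2', hc'])
  unfold DOBDD.accepts at a1 a2
  rw [hrun, h1] at a1
  rw [hrun, h1'] at a2
  exact a2 a1
end

section
/- For all integers n and d with 16 ≤ d ≤ 2^{n/4}: there exists a Boolean function on {0,1}^n computed by a deterministic OBDD of width at most d but by no deterministic OBDD of width at most ⌊d/8⌋ − 1, and there exists a Boolean function on {0,1}^n computed by a nondeterministic OBDD of width at most d but by no nondeterministic OBDD of width at most ⌊d/8⌋ − 1; i.e., OBDD^{⌊d/8⌋−1} ⊊ OBDD^d and NOBDD^{⌊d/8⌋−1} ⊊ NOBDD^d. -/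
theorem lw_foldl_ind {β : Type*} (n : ℕ) (P : ℕ → β → Prop) (step : β → Fin n → β) (init : β)
    (h0 : P 0 init) (hs : ∀ (j : Fin n) v, P j v → P (j + 1) (step v j)) :
    P n ((List.finRange n).foldl step init) := by
  induction n with
  | zero => simpa using h0
  | succ n ih =>
    rw [List.finRange_succ_last, List.foldl_append, List.foldl_map]
    have := ih (fun v j => step v j.castSucc) (fun j v h => hs j.castSucc v h)
    exact hs (Fin.last n) _ this

/-- Discrete intermediate values. -/
theorem lw_ivt (c : ℕ → ℕ) (h0 : c 0 = 0) (hs : ∀ l, c (l + 1) ≤ c l + 1) (l j : ℕ)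
    (hj : j ≤ c l) : ∃ l', c l' = j := by
  induction l with
  | zero => exact ⟨0, by omega⟩
  | succ l ih =>
    by_cases h : j ≤ c l
    · exact ih h
    · exact ⟨l + 1, by have := hs l; omega⟩

theorem lw_count (N : ℕ) (D : Finset (Fin N) → Type) [∀ S, Fintype (D S)]
    (Φ : ∀ S, D S → ((Fin N → Bool) → Bool)) (j C : ℕ)
    (hC : ∀ S : Finset (Fin N), S.card = j → Fintype.card (D S) ≤ C)
    (hlt : 2 ^ N * C < 2 ^ (2 ^ N)) :
    ∃ h, ∀ S : Finset (Fin N), S.card = j → ∀ x : D S, Φ S x ≠ h := by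
  by_contra hcon
  push Not at hcon
  have hsurj : Function.Surjective
      (fun p : (Σ S : {S : Finset (Fin N) // S.card = j}, D S.1) => Φ p.1.1 p.2) := by
    intro h
    obtain ⟨S, hS, x, hx⟩ := hcon h
    exact ⟨⟨⟨S, hS⟩, x⟩, hx⟩
  have h1 := Fintype.card_le_of_surjective _ hsurj
  rw [Fintype.card_sigma] at h1
  have h2 : ∑ S : {S : Finset (Fin N) // S.card = j}, Fintype.card (D S.1) ≤
      ∑ S : {S : Finset (Fin N) // S.card = j}, C :=
    Finset.sum_le_sum (fun S _ => hC S.1 S.2)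
  rw [Finset.sum_const, Finset.card_univ, smul_eq_mul] at h2
  have h3 : Fintype.card {S : Finset (Fin N) // S.card = j} ≤ 2 ^ N := by
    refine (Fintype.card_subtype_le _).trans ?_
    simp
  have h4 := Nat.mul_le_mul_right C h3
  simp only [Fintype.card_fun, Fintype.card_bool, Fintype.card_fin] at h1
  omega

/-- The function on `n` variables which applies `h` to the first `N` of them. -/
def lwLift {n N : ℕ} (hN : N ≤ n) (h : (Fin N → Bool) → Bool) : (Fin n → Bool) → Bool :=
  fun ν => h (fun i => ν (Fin.castLE hN i))

/-- Extend an assignment on a subset of the first `N` variables by zeros. -/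
noncomputable def lwExt {n N : ℕ} (p : Fin N → Prop) (x : {i // p i} → Bool) : Fin n → Bool :=
  fun i => open Classical in
    if h : ∃ h : (i : ℕ) < N, p ⟨i, h⟩ then x ⟨⟨i, h.1⟩, h.2⟩ else false

/-- For each order there is a cut at which exactly `j` of the first `N` variables are read. -/
theorem lw_cut {n N : ℕ} (hN : N ≤ n) (π : Equiv.Perm (Fin n)) (j : ℕ) (hj : j ≤ N) :
    ∃ l, ∃ S : Finset (Fin N), S.card = j ∧
      ∀ i : Fin N, i ∈ S ↔ ((π.symm (Fin.castLE hN i) : Fin n) : ℕ) < l := by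
  let c : ℕ → ℕ := fun l =>
    (Finset.univ.filter (fun i : Fin N => ((π.symm (Fin.castLE hN i) : Fin n) : ℕ) < l)).card
  obtain ⟨l, hl⟩ := lw_ivt c (by simp [c]) (by
    intro l
    have hsub : (Finset.univ.filter
          (fun i : Fin N => ((π.symm (Fin.castLE hN i) : Fin n) : ℕ) < l + 1)) ⊆
        (Finset.univ.filter (fun i : Fin N => ((π.symm (Fin.castLE hN i) : Fin n) : ℕ) < l)) ∪
        (Finset.univ.filter (fun i : Fin N => ((π.symm (Fin.castLE hN i) : Fin n) : ℕ) = l)) := by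
      intro i
      simp only [Finset.mem_filter, Finset.mem_univ, true_and, Finset.mem_union]
      omega
    refine (Finset.card_le_card hsub).trans ((Finset.card_union_le _ _).trans ?_)
    refine Nat.add_le_add_left ?_ _
    rw [Finset.card_le_one]
    intro a ha b hb
    simp only [Finset.mem_filter, Finset.mem_univ, true_and] at ha hb
    have h3 : π.symm (Fin.castLE hN a) = π.symm (Fin.castLE hN b) := Fin.ext (by omega)
    have h4 := π.symm.injective h3
    have h5 := congrArg Fin.val h4
    exact Fin.ext (by simpa using h5)) n j (by
    have : c n = N := by
      simp [c]
    omega)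
  exact ⟨l, _, hl, by intro i; simp⟩

theorem lw_mem_take {n l : ℕ} {j : Fin n} (h : j ∈ (List.finRange n).take l) : (j : ℕ) < l := by
  rw [List.mem_take_iff_getElem] at h
  obtain ⟨i, hi, rfl⟩ := h
  simp at hi ⊢
  omega

theorem lw_mem_drop {n l : ℕ} {j : Fin n} (h : j ∈ (List.finRange n).drop l) : l ≤ (j : ℕ) := by
  rw [List.mem_drop_iff_getElem] at h
  obtain ⟨i, hi, rfl⟩ := h
  simp

theorem lw_ext_read {n N l : ℕ} (hN : N ≤ n) (π : Equiv.Perm (Fin n)) (S : Finset (Fin N))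
    (hS : ∀ i : Fin N, i ∈ S ↔ ((π.symm (Fin.castLE hN i) : Fin n) : ℕ) < l)
    (z : Fin N → Bool) (j : Fin n) (hj : (j : ℕ) < l) :
    (lwExt (fun _ => True) (fun i => z i.1) : Fin n → Bool) (π j) =
      (lwExt (fun i => i ∈ S) (fun i => z i.1) : Fin n → Bool) (π j) := by
  unfold lwExt
  by_cases h : ((π j : Fin n) : ℕ) < N
  · have : (⟨π j, h⟩ : Fin N) ∈ S := by
      rw [hS]
      have : Fin.castLE hN ⟨π j, h⟩ = π j := Fin.ext rfl
      rw [this]; simpa using hj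
    simp [h, this]
  · simp [h]

theorem lw_ext_unread {n N l : ℕ} (hN : N ≤ n) (π : Equiv.Perm (Fin n)) (S : Finset (Fin N))
    (hS : ∀ i : Fin N, i ∈ S ↔ ((π.symm (Fin.castLE hN i) : Fin n) : ℕ) < l)
    (z : Fin N → Bool) (j : Fin n) (hj : l ≤ (j : ℕ)) :
    (lwExt (fun _ => True) (fun i => z i.1) : Fin n → Bool) (π j) =
      (lwExt (fun i => ¬ i ∈ S) (fun i => z i.1) : Fin n → Bool) (π j) := by
  unfold lwExt
  by_cases h : ((π j : Fin n) : ℕ) < N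
  · have : ¬ (⟨π j, h⟩ : Fin N) ∈ S := by
      rw [hS]
      have : Fin.castLE hN ⟨π j, h⟩ = π j := Fin.ext rfl
      rw [this]; simpa using hj
    simp [h, this]
  · simp [h]

theorem lw_lift_ext {n N : ℕ} (hN : N ≤ n) (h : (Fin N → Bool) → Bool) (z : Fin N → Bool) :
    lwLift hN h (lwExt (fun _ => True) (fun i => z i.1)) = h z := by
  unfold lwLift
  congr 1
  funext i
  simp [lwExt]

theorem lw_det_cut {n N w W : ℕ} (hN : N ≤ n) (hw : w ≤ W) (j : ℕ) (hj : j ≤ N)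
    (h : (Fin N → Bool) → Bool) (M : DOBDD n w) (hM : M.computes (lwLift hN h)) :
    ∃ S : Finset (Fin N), S.card = j ∧
      ∃ (a : ({i // i ∈ S} → Bool) → Fin W) (B : Fin W → ({i // ¬ i ∈ S} → Bool) → Bool),
        (fun z => B (a (fun i => z i.1)) (fun i => z i.1)) = h := by
  classical
  obtain ⟨l, S, hc, hS⟩ := lw_cut hN M.ord j hj
  let R : List (Fin n) → (Fin n → Bool) → Fin w → Fin w := fun L ν s =>
    L.foldl (fun v j => M.T j (ν (M.ord j)) v) s
  refine ⟨S, hc, fun x => Fin.castLE hw (R ((List.finRange n).take l) (lwExt _ x) M.start),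
    fun v y => if hv : (v : ℕ) < w then
      decide (R ((List.finRange n).drop l) (lwExt _ y) ⟨v, hv⟩ ∈ M.Accept) else false, ?_⟩
  funext z
  have key := hM (lwExt (fun _ => True) (fun i => z i.1))
  rw [lw_lift_ext] at key
  have hrun : M.run (lwExt (fun _ => True) (fun i => z i.1)) =
      R ((List.finRange n).drop l) (lwExt (fun i => ¬ i ∈ S) (fun i => z i.1))
        (R ((List.finRange n).take l) (lwExt (fun i => i ∈ S) (fun i => z i.1)) M.start) := by
    unfold DOBDD.run
    conv_lhs => rw [← List.take_append_drop l (List.finRange n), List.foldl_append]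
    have e1 : (List.foldl (fun v j => M.T j ((lwExt (fun _ => True) (fun i => z i.1) :
        Fin n → Bool) (M.ord j)) v) M.start ((List.finRange n).take l)) =
        R ((List.finRange n).take l) (lwExt (fun i => i ∈ S) (fun i => z i.1)) M.start := by
      apply List.foldl_ext
      intro v k hk
      rw [lw_ext_read hN M.ord S hS z k (lw_mem_take hk)]
    rw [e1]
    apply List.foldl_ext
    intro v k hk
    rw [lw_ext_unread hN M.ord S hS z k (lw_mem_drop hk)]
  unfold DOBDD.accepts at key
  rw [hrun] at key
  rw [Bool.eq_iff_iff, ← key]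
  simp

theorem lw_nfold {n w : ℕ} (M : NOBDD n w) (ν : Fin n → Bool) (L : List (Fin n))
    (A : Set (Fin w)) (u : Fin w) :
    u ∈ L.foldl (fun S j => {w | ∃ v ∈ S, w ∈ M.T j (ν (M.ord j)) v}) A ↔
      ∃ v ∈ A, u ∈ L.foldl (fun S j => {w | ∃ v ∈ S, w ∈ M.T j (ν (M.ord j)) v}) {v} := by
  induction L generalizing A with
  | nil => simp
  | cons k L ih =>
    simp only [List.foldl_cons]
    rw [ih]
    constructor
    · rintro ⟨v, ⟨v', hv', hv⟩, hu⟩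
      refine ⟨v', hv', ?_⟩
      rw [ih]
      exact ⟨v, ⟨v', rfl, hv⟩, hu⟩
    · rintro ⟨v', hv', hu⟩
      rw [ih] at hu
      obtain ⟨v, ⟨v'', rfl, hv⟩, hu⟩ := hu
      exact ⟨v, ⟨_, hv', hv⟩, hu⟩

theorem lw_nondet_cut {n N w W : ℕ} (hN : N ≤ n) (hw : w ≤ W) (j : ℕ) (hj : j ≤ N)
    (h : (Fin N → Bool) → Bool) (M : NOBDD n w) (hM : M.computes (lwLift hN h)) :
    ∃ S : Finset (Fin N), S.card = j ∧
      ∃ (A : Fin W → ({i // i ∈ S} → Bool) → Bool) (B : Fin W → ({i // ¬ i ∈ S} → Bool) → Bool),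
        (fun z => decide (∃ v, A v (fun i => z i.1) = true ∧ B v (fun i => z i.1) = true)) = h := by
  classical
  obtain ⟨l, S, hc, hS⟩ := lw_cut hN M.ord j hj
  let R : List (Fin n) → (Fin n → Bool) → Set (Fin w) → Set (Fin w) := fun L ν A =>
    L.foldl (fun S j => {w | ∃ v ∈ S, w ∈ M.T j (ν (M.ord j)) v}) A
  refine ⟨S, hc, fun v x => if hv : (v : ℕ) < w then
      decide (⟨v, hv⟩ ∈ R ((List.finRange n).take l) (lwExt _ x) {M.start}) else false,
    fun v y => if hv : (v : ℕ) < w then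
      decide (∃ u ∈ R ((List.finRange n).drop l) (lwExt _ y) {⟨v, hv⟩}, u ∈ M.Accept)
      else false, ?_⟩
  funext z
  have key := hM (lwExt (fun _ => True) (fun i => z i.1))
  rw [lw_lift_ext] at key
  have hrun : M.reach (lwExt (fun _ => True) (fun i => z i.1)) =
      R ((List.finRange n).drop l) (lwExt (fun i => ¬ i ∈ S) (fun i => z i.1))
        (R ((List.finRange n).take l) (lwExt (fun i => i ∈ S) (fun i => z i.1)) {M.start}) := by
    unfold NOBDD.reach
    conv_lhs => rw [← List.take_append_drop l (List.finRange n), List.foldl_append]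
    have e1 : (List.foldl (fun S j => {w | ∃ v ∈ S, w ∈ M.T j ((lwExt (fun _ => True)
        (fun i => z i.1) : Fin n → Bool) (M.ord j)) v}) {M.start} ((List.finRange n).take l)) =
        R ((List.finRange n).take l) (lwExt (fun i => i ∈ S) (fun i => z i.1)) {M.start} := by
      apply List.foldl_ext
      intro v k hk
      rw [lw_ext_read hN M.ord S hS z k (lw_mem_take hk)]
    rw [e1]
    apply List.foldl_ext
    intro v k hk
    rw [lw_ext_unread hN M.ord S hS z k (lw_mem_drop hk)]
  unfold NOBDD.accepts at key
  rw [hrun] at key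
  rw [Bool.eq_iff_iff, ← key, decide_eq_true_iff]
  constructor
  · rintro ⟨v, h1, h2⟩
    by_cases hv : (v : ℕ) < w
    · simp only [hv, dite_true, decide_eq_true_iff] at h1 h2
      obtain ⟨u, hu, hacc⟩ := h2
      exact ⟨u, (lw_nfold M _ _ _ u).2 ⟨_, h1, hu⟩, hacc⟩
    · simp [hv] at h1
  · rintro ⟨u, hu, hacc⟩
    obtain ⟨v, h1, h2⟩ := (lw_nfold M _ _ _ u).1 hu
    refine ⟨Fin.castLE hw v, ?_, ?_⟩
    · simpa using h1
    · simpa using ⟨u, h2, hacc⟩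

/-- Residual of `f` after reading the first `j` bits of `ν`. -/
def lwRes {n : ℕ} (f : (Fin n → Bool) → Bool) (j : ℕ) (ν : Fin n → Bool) :
    (Fin n → Bool) → Bool :=
  fun y => f (fun i => if (i : ℕ) < j then ν i else y i)

theorem lw_det_upper {n W : ℕ} (f : (Fin n → Bool) → Bool)
    (hk : ∀ j, ∃ k : (Fin n → Bool) → Fin W, ∀ ν ν', k ν = k ν' → lwRes f j ν = lwRes f j ν') :
    ∃ M : DOBDD n W, M.computes f := by
  classical
  choose k hk using hk
  let c : ℕ → (Fin n → Bool) → Fin W := fun j ν =>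
    k j (Function.invFun (lwRes f j) (lwRes f j ν))
  have hc : ∀ j ν ν', c j ν = c j ν' ↔ lwRes f j ν = lwRes f j ν' := by
    intro j ν ν'
    constructor
    · intro h
      have := hk j _ _ h
      rwa [Function.invFun_eq (f := lwRes f j) ⟨ν, rfl⟩,
        Function.invFun_eq (f := lwRes f j) ⟨ν', rfl⟩] at this
    · intro h
      simp only [c, h]
  have h0 : ∀ ν ν', c 0 ν = c 0 ν' := fun ν ν' => (hc _ _ _).2 (by funext y; simp [lwRes])
  have hs : ∀ (j : Fin n) ν ν', c j ν = c j ν' → ν j = ν' j → c (j + 1) ν = c (j + 1) ν' := by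
    intro j ν ν' h hb
    rw [hc] at h ⊢
    funext y
    have := congrFun h (Function.update y j (ν j))
    unfold lwRes at this ⊢
    convert this using 2 <;>
    · funext i
      by_cases hij : i = j
      · subst hij; simp [hb]
      · have : (i : ℕ) ≠ j := fun h => hij (Fin.ext h)
        have e : (i : ℕ) < j + 1 ↔ (i : ℕ) < j := by omega
        simp [hij, e]
  have hn : ∀ ν ν', c n ν = c n ν' → f ν = f ν' := by
    intro ν ν' h
    rw [hc] at h
    have := congrFun h ν
    simpa [lwRes] using this
  let M : DOBDD n W :=
    { ord := Equiv.refl _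
      T := fun j b v => if h : ∃ ν, c j ν = v ∧ ν j = b then c (j + 1) h.choose else v
      start := c 0 (fun _ => false)
      Accept := Finset.univ.filter (fun v => ∃ ν, c n ν = v ∧ f ν = true) }
  refine ⟨M, fun ν => ?_⟩
  have hrun : M.run ν = c n ν := by
    refine lw_foldl_ind n (fun j v => v = c j ν) _ _ (h0 _ _) ?_
    rintro j v rfl
    have hex : ∃ ν', c j ν' = c j ν ∧ ν' j = ν j := ⟨ν, rfl, rfl⟩
    change (if h : ∃ ν', c j ν' = c j ν ∧ ν' j = ν j then c (j + 1) h.choose else c j ν) = _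
    rw [dif_pos hex]
    exact hs j _ _ hex.choose_spec.1 hex.choose_spec.2
  unfold DOBDD.accepts
  rw [hrun]
  simp only [M, Finset.mem_filter, Finset.mem_univ, true_and]
  constructor
  · rintro ⟨ν', h1, h2⟩
    rw [← hn _ _ h1, h2]
  · intro h
    exact ⟨ν, rfl, h⟩

theorem lw_det_upper' {n m t : ℕ} (hN : m + t + 1 ≤ n) (ht : 2 ^ t ≤ m)
    (h : (Fin (m + t + 1) → Bool) → Bool) :
    ∃ M : DOBDD n (2 ^ m), M.computes (lwLift hN h) := by
  classical
  apply lw_det_upper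
  intro j
  by_cases hj : j ≤ m
  · have e : (Fin m → Bool) ≃ Fin (2 ^ m) := Fintype.equivFinOfCardEq (by simp)
    refine ⟨fun ν => e (fun i => ν ⟨i, by omega⟩), fun ν ν' hh => ?_⟩
    have hh := e.injective hh
    funext y
    unfold lwRes
    congr 1
    funext i
    split_ifs with hi
    · exact congrFun hh ⟨i, by omega⟩
    · rfl
  · obtain ⟨e⟩ : Nonempty (((Fin t → Bool) → Bool) ↪ Fin (2 ^ m)) := by
      apply Function.Embedding.nonempty_of_card_le
      simp only [Fintype.card_fun, Fintype.card_bool, Fintype.card_fin]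
      exact Nat.pow_le_pow_right (by norm_num) ht
    refine ⟨fun ν => e (fun q => lwRes (lwLift hN h) j ν
      (fun i => if hi : m + 1 ≤ (i : ℕ) ∧ (i : ℕ) < m + t + 1 then q ⟨i - (m + 1), by omega⟩
        else false)), fun ν ν' hh => ?_⟩
    have hh := e.injective hh
    have aux : ∀ ν y, lwRes (lwLift hN h) j ν y = lwRes (lwLift hN h) j ν
        (fun i => if hi : m + 1 ≤ (i : ℕ) ∧ (i : ℕ) < m + t + 1 then
          (fun k : Fin t => y ⟨k + (m + 1), by omega⟩) ⟨i - (m + 1), by omega⟩ else false) := by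
      intro ν y
      unfold lwRes lwLift
      congr 1
      funext i
      simp only [Fin.val_castLE]
      split_ifs with h1 h2
      · rfl
      · congr 1
        apply Fin.ext
        simp only [Fin.val_castLE]
        omega
      · exfalso
        have := i.2
        omega
    funext y
    rw [aux ν y, aux ν' y]
    exact congrFun hh (fun k : Fin t => y ⟨k + (m + 1), by omega⟩)

theorem lw_nondet_upper {n d : ℕ} (f : (Fin n → Bool) → Bool) (Q : Type) (e : Fin d ≃ Q) (s : Q)
    (T : Fin n → Bool → Q → Q → Prop) (S : ℕ → (Fin n → Bool) → Q → Prop)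
    (h0 : ∀ ν q, S 0 ν q ↔ q = s)
    (hs : ∀ (j : Fin n) ν w, S (j + 1) ν w ↔ ∃ v, S j ν v ∧ T j (ν j) v w)
    (hn : ∀ ν, f ν = true ↔ ∃ q, S n ν q) : ∃ M : NOBDD n d, M.computes f := by
  let M : NOBDD n d :=
    { ord := Equiv.refl _
      T := fun j b v => {w | T j b (e v) (e w)}
      start := e.symm s
      Accept := Finset.univ }
  refine ⟨M, fun ν => ?_⟩
  have hr : M.reach ν = {v | S n ν (e v)} := by
    refine lw_foldl_ind n (fun j A => A = {v | S j ν (e v)}) _ _ ?_ ?_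
    · ext v
      simp [M, h0, Equiv.eq_symm_apply]
    · rintro j A rfl
      ext v
      simp only [Set.mem_ofPred_eq, hs]
      constructor
      · rintro ⟨u, h1, h2⟩
        exact ⟨e u, h1, h2⟩
      · rintro ⟨u, h1, h2⟩
        refine ⟨e.symm u, by simpa using h1, ?_⟩
        change T j (ν j) (e (e.symm u)) (e v)
        simpa using h2
  unfold NOBDD.accepts
  rw [hr, hn]
  constructor
  · rintro ⟨v, h1, -⟩
    exact ⟨e v, h1⟩
  · rintro ⟨q, h1⟩
    exact ⟨e.symm q, by simpa using h1, by simp [M]⟩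

theorem lw_nondet_upper' {n m : ℕ} (hm : 0 < m) (hN : 2 * m ≤ n)
    (h : (Fin (2 * m) → Bool) → Bool) :
    ∃ M : NOBDD n (2 ^ m), M.computes (lwLift hN h) := by
  classical
  have e : Fin (2 ^ m) ≃ (Fin m → Bool) := (Fintype.equivFinOfCardEq (by simp)).symm
  let g : (Fin m → Bool) → (Fin m → Bool) → Bool := fun x y =>
    h (fun i => if hi : (i : ℕ) < m then x ⟨i, hi⟩ else y ⟨i - m, by omega⟩)
  let X : (Fin n → Bool) → Fin m → Bool := fun ν i => ν ⟨i, by omega⟩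
  refine lw_nondet_upper _ (Fin m → Bool) e (fun _ => false)
    (fun j b v w => if hj : (j : ℕ) < m then w = Function.update v ⟨j, hj⟩ b
      else (if (j : ℕ) = m then g v w = true else w = v) ∧
        (∀ i : Fin m, (i : ℕ) + m = j → w i = b))
    (fun j ν q => if j ≤ m then q = (fun i : Fin m => if (i : ℕ) < j then X ν i else false)
      else g (X ν) q = true ∧ ∀ i : Fin m, ∀ hi : (i : ℕ) + m < j, q i = ν ⟨i + m, by omega⟩)
    ?_ ?_ ?_
  · intro ν q
    simp
  · intro j ν w
    rcases lt_trichotomy (j : ℕ) m with hj | hj | hj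
    · have h1 : (j : ℕ) + 1 ≤ m := hj
      have h2 : (j : ℕ) ≤ m := hj.le
      simp only [h1, h2, hj, if_true, dite_true, exists_eq_left]
      have : (fun i : Fin m => if (i : ℕ) < j + 1 then X ν i else false) =
          Function.update (fun i : Fin m => if (i : ℕ) < j then X ν i else false) ⟨j, hj⟩ (ν j) := by
        funext i
        by_cases hij : i = ⟨j, hj⟩
        · subst hij; simp [X]
        · have h3 : (i : ℕ) ≠ j := fun h => hij (Fin.ext h)
          have h4 : (i : ℕ) < j + 1 ↔ (i : ℕ) < j := by omega
          simp [hij, h4]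
      rw [this]
    · have h1 : ¬ (j : ℕ) + 1 ≤ m := by omega
      have h2 : (j : ℕ) ≤ m := hj.le
      have h3 : ¬ (j : ℕ) < m := by omega
      have hX : (fun i : Fin m => if (i : ℕ) < j then X ν i else false) = X ν := by
        funext i
        rw [if_pos (by omega)]
      simp only [h1, h2, h3, if_true, if_false, dite_false, hX, exists_eq_left]
      rw [if_pos hj]
      refine and_congr_right fun _ => forall_congr' fun i => ?_
      constructor
      · intro hh hi
        rw [hh (by omega)]
        congr 1
        exact Fin.ext hi
      · intro hh hi
        rw [hh (by omega)]
        congr 1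
        exact Fin.ext (by simp only; omega)
    · have h1 : ¬ (j : ℕ) + 1 ≤ m := by omega
      have h2 : ¬ (j : ℕ) ≤ m := by omega
      have h3 : ¬ (j : ℕ) < m := by omega
      have h4 : ¬ (j : ℕ) = m := by omega
      simp only [h1, h2, h3, h4, if_false, dite_false]
      constructor
      · rintro ⟨hg, hh⟩
        refine ⟨w, ⟨hg, fun i hi => hh i (by omega)⟩, rfl, fun i hi => ?_⟩
        rw [hh i (by omega)]
        congr 1
        exact Fin.ext hi
      · rintro ⟨v, ⟨hg, hh⟩, rfl, hb⟩
        refine ⟨hg, fun i hi => ?_⟩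
        by_cases hi' : (i : ℕ) + m < j
        · exact hh i hi'
        · rw [hb i (by omega)]
          congr 1
          exact Fin.ext (by simp only; omega)
  · intro ν
    have h1 : ¬ n ≤ m := by omega
    simp only [h1, if_false]
    have hg : ∀ q : Fin m → Bool, (∀ i : Fin m, q i = ν ⟨i + m, by omega⟩) →
        g (X ν) q = lwLift hN h ν := by
      intro q hq
      simp only [g, lwLift]
      congr 1
      funext i
      split_ifs with hi
      · rfl
      · rw [hq]
        congr 1
        exact Fin.ext (by simp only [Fin.val_castLE]; omega)
    constructor
    · intro hh
      refine ⟨fun i => ν ⟨i + m, by omega⟩, ?_, fun i hi => rfl⟩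
      rw [hg _ (fun i => rfl), hh]
    · rintro ⟨q, hq, hi⟩
      rw [← hg q (fun i => hi i (by omega)), hq]

theorem lw_card_compl {N : ℕ} (S : Finset (Fin N)) :
    Fintype.card {i // ¬ i ∈ S} = N - S.card := by
  simp [Fintype.card_subtype_compl]

theorem lw_det_exists {n m w : ℕ} (hm : 4 ≤ m) (hn : 4 * m ≤ n) (hw : w ≤ 2 ^ (m - 2)) :
    ∃ f : (Fin n → Bool) → Bool, (∃ M : DOBDD n (2 ^ m), M.computes f) ∧
      f ∉ OBDDclass n w := by
  classical
  obtain ⟨t, ht1, ht2⟩ : ∃ t, 2 ^ t ≤ m ∧ m < 2 ^ (t + 1) :=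
    ⟨Nat.log 2 m, Nat.pow_log_le_self 2 (by omega), Nat.lt_pow_succ_log_self (by norm_num) m⟩
  have htm : t < m := Nat.lt_two_pow_self.trans_le ht1
  have hN : m + t + 1 ≤ n := by omega
  obtain ⟨h, hh⟩ := lw_count (m + t + 1)
    (fun S => (({i // i ∈ S} → Bool) → Fin (2 ^ (m - 2))) ×
      (Fin (2 ^ (m - 2)) → ({i // ¬ i ∈ S} → Bool) → Bool))
    (fun S x z => x.2 (x.1 (fun i => z i.1)) (fun i => z i.1)) (m - 1)
    (2 ^ ((m - 2) * 2 ^ (m - 1) + 2 ^ (t + 2) * 2 ^ (m - 2)))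
    (by
      intro S hS
      simp only [Fintype.card_prod, Fintype.card_fun, Fintype.card_bool, Fintype.card_fin,
        lw_card_compl, Fintype.card_coe, hS]
      rw [show m + t + 1 - (m - 1) = t + 2 by omega, ← pow_mul, ← pow_mul, ← pow_add])
    (by
      rw [← pow_add]
      apply Nat.pow_lt_pow_right (by norm_num)
      obtain ⟨k, rfl⟩ : ∃ k, m = k + 2 := ⟨m - 2, by omega⟩
      have e1 : k + 2 - 2 = k := by omega
      have e2 : k + 2 - 1 = k + 1 := by omega
      rw [e1, e2]
      have hk : k < 2 ^ k := Nat.lt_two_pow_self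
      have p1 : 2 ^ (k + 2 + t + 1) = 4 * (2 ^ k * 2 ^ (t + 1)) := by ring
      have p2 : 2 ^ (t + 2) * 2 ^ k = 2 * (2 ^ k * 2 ^ (t + 1)) := by ring
      have p3 : k * 2 ^ (k + 1) = 2 * (2 ^ k * k) := by ring
      have p4 : 2 ^ k * (k + 3) ≤ 2 ^ k * 2 ^ (t + 1) := Nat.mul_le_mul_left _ (by omega)
      have p5 : 2 ^ k * (k + 3) = 2 ^ k * k + 3 * 2 ^ k := by ring
      rw [p1, p2, p3]
      omega)
  refine ⟨lwLift hN h, lw_det_upper' hN ht1 h, ?_⟩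
  rintro ⟨d', hd', M, hM⟩
  obtain ⟨S, hS, a, B, hab⟩ := lw_det_cut hN (hd'.trans hw) (m - 1) (by omega) h M hM
  exact hh S hS (a, B) hab

theorem lw_nondet_exists {n m w : ℕ} (hm : 4 ≤ m) (hn : 4 * m ≤ n) (hw : w ≤ 2 ^ (m - 2)) :
    ∃ f : (Fin n → Bool) → Bool, (∃ M : NOBDD n (2 ^ m), M.computes f) ∧
      f ∉ NOBDDclass n w := by
  classical
  have hN : 2 * m ≤ n := by omega
  obtain ⟨h, hh⟩ := lw_count (2 * m)
    (fun S => (Fin (2 ^ (m - 2)) → ({i // i ∈ S} → Bool) → Bool) ×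
      (Fin (2 ^ (m - 2)) → ({i // ¬ i ∈ S} → Bool) → Bool))
    (fun S x z => decide (∃ v, x.1 v (fun i => z i.1) = true ∧ x.2 v (fun i => z i.1) = true)) m
    (2 ^ (2 ^ m * 2 ^ (m - 2) + 2 ^ m * 2 ^ (m - 2)))
    (by
      intro S hS
      simp only [Fintype.card_prod, Fintype.card_fun, Fintype.card_bool, Fintype.card_fin,
        lw_card_compl, Fintype.card_coe, hS]
      rw [show 2 * m - m = m by omega, ← pow_mul, ← pow_add])
    (by
      rw [← pow_add]
      apply Nat.pow_lt_pow_right (by norm_num)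
      obtain ⟨k, rfl⟩ : ∃ k, m = k + 2 := ⟨m - 2, by omega⟩
      have e1 : k + 2 - 2 = k := by omega
      rw [e1]
      have hk : k < 2 ^ k := Nat.lt_two_pow_self
      have p1 : 2 ^ (2 * (k + 2)) = 16 * (2 ^ k * 2 ^ k) := by ring
      have p2 : 2 ^ (k + 2) * 2 ^ k = 4 * (2 ^ k * 2 ^ k) := by ring
      have p3 : 2 ^ k * 1 ≤ 2 ^ k * 2 ^ k := Nat.mul_le_mul_left _ Nat.one_le_two_pow
      rw [p1, p2]
      omega)
  refine ⟨lwLift hN h, lw_nondet_upper' (by omega) hN h, ?_⟩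
  rintro ⟨d', hd', M, hM⟩
  obtain ⟨S, hS, a, B, hab⟩ := lw_nondet_cut hN (hd'.trans hw) m (by omega) h M hM
  refine hh S hS (a, B) ?_
  rw [← hab]

/-- For all `n, d` with `16 ≤ d ≤ 2^{n/4}`: `OBDD^{⌊d/8⌋-1} ⊊ OBDD^d` and
`NOBDD^{⌊d/8⌋-1} ⊊ NOBDD^d`. -/
theorem large_width_hierarchy (n d : ℕ) (h1 : 16 ≤ d) (h2 : d ≤ 2 ^ (n / 4)) :
    (∃ f : (Fin n → Bool) → Bool, f ∈ OBDDclass n d ∧ f ∉ OBDDclass n (d / 8 - 1)) ∧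
    (∃ f : (Fin n → Bool) → Bool, f ∈ NOBDDclass n d ∧ f ∉ NOBDDclass n (d / 8 - 1)) ∧
    OBDDclass n (d / 8 - 1) ⊂ OBDDclass n d ∧
    NOBDDclass n (d / 8 - 1) ⊂ NOBDDclass n d := by
  obtain ⟨m, hm1, hm2⟩ : ∃ m, 2 ^ m ≤ d ∧ d < 2 ^ (m + 1) :=
    ⟨Nat.log 2 d, Nat.pow_log_le_self 2 (by omega), Nat.lt_pow_succ_log_self (by norm_num) d⟩
  have hm4 : 4 ≤ m := by
    by_contra hlt
    have : 2 ^ (m + 1) ≤ 2 ^ 4 := Nat.pow_le_pow_right (by norm_num) (by omega)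
    omega
  have hmn : m ≤ n / 4 := (Nat.pow_le_pow_iff_right (by norm_num)).1 (hm1.trans h2)
  have hn : 4 * m ≤ n := by omega
  have hw : d / 8 - 1 ≤ 2 ^ (m - 2) := by
    obtain ⟨k, rfl⟩ : ∃ k, m = k + 2 := ⟨m - 2, by omega⟩
    have e1 : k + 2 - 2 = k := by omega
    have e2 : 2 ^ (k + 2 + 1) = 8 * 2 ^ k := by ring
    rw [e1]
    omega
  obtain ⟨f, ⟨M, hM⟩, hf⟩ := lw_det_exists hm4 hn hw
  obtain ⟨g, ⟨M', hM'⟩, hg⟩ := lw_nondet_exists hm4 hn hw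
  have hf1 : f ∈ OBDDclass n d := ⟨_, hm1, M, hM⟩
  have hg1 : g ∈ NOBDDclass n d := ⟨_, hm1, M', hM'⟩
  refine ⟨⟨f, hf1, hf⟩, ⟨g, hg1, hg⟩, ⟨?_, fun hsub => hf (hsub hf1)⟩,
    ⟨?_, fun hsub => hg (hsub hg1)⟩⟩
  · rintro u ⟨d', hd', hu⟩
    exact ⟨d', by omega, hu⟩
  · rintro u ⟨d', hd', hu⟩
    exact ⟨d', by omega, hu⟩
end

section
/- For every integer k that is a multiple of 4 with k ≥ 4, there are infinitely many n such that every deterministic OBDD and every nondeterministic OBDD on n variables computing the Boolean function EQS^k_n has width at least 2^{k/4}. -/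
theorem filterMap_count_aux (p : ℕ → Prop) [DecidablePred p] (x : ℕ → Bool) (N : ℕ) :
    (List.range N).filterMap (fun j => if p j then some (x (Nat.count p j)) else none)
      = (List.range (Nat.count p N)).map x := by
  induction N with
  | zero => simp
  | succ N ih =>
    rw [List.range_succ, List.filterMap_append, ih, Nat.count_succ]
    by_cases h : p N
    · simp [h, List.range_succ]
    · simp [h]

theorem count_not_aux (p : ℕ → Prop) [DecidablePred p] (N : ℕ) :
    Nat.count p N + Nat.count (fun j => ¬ p j) N = N := by
  induction N with
  | zero => simp
  | succ N ih =>
    rw [Nat.count_succ, Nat.count_succ]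
    by_cases h : p N <;> simp [h] <;> omega

/-- discrete intermediate value -/
theorem discrete_ivt_aux (c : ℕ → ℕ) (n m : ℕ) (h0 : c 0 = 0) (hn : m ≤ c n)
    (hs : ∀ t, c (t + 1) ≤ c t + 1) : ∃ t, c t = m := by
  induction n with
  | zero => exact ⟨0, by omega⟩
  | succ n ih =>
    by_cases h : m ≤ c n
    · exact ih h
    · exact ⟨n + 1, by have := hs n; omega⟩

/-- One step of a nondeterministic OBDD. -/
def nstep {n d : ℕ} (M : NOBDD n d) (ν : Fin n → Bool) (S : Set (Fin d)) (j : Fin n) :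
    Set (Fin d) := {w | ∃ v ∈ S, w ∈ M.T j (ν (M.ord j)) v}

theorem mem_foldl_nstep {n d : ℕ} (M : NOBDD n d) (ν : Fin n → Bool) (l : List (Fin n))
    (S : Set (Fin d)) (w : Fin d) :
    w ∈ l.foldl (nstep M ν) S ↔ ∃ v ∈ S, w ∈ l.foldl (nstep M ν) {v} := by
  induction l generalizing S with
  | nil => simp
  | cons a l ih =>
    simp only [List.foldl_cons]
    rw [ih]
    constructor
    · rintro ⟨v, ⟨u, hu, hv⟩, hw⟩
      exact ⟨u, hu, (ih _).2 ⟨v, ⟨u, rfl, hv⟩, hw⟩⟩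
    · rintro ⟨u, hu, hw⟩
      obtain ⟨v, ⟨u', hu', hv⟩, hw2⟩ := (ih _).1 hw
      rw [Set.mem_singleton_iff] at hu'
      subst hu'
      exact ⟨v, ⟨_, hu, hv⟩, hw2⟩

theorem foldl_nstep_congr {n d : ℕ} (M : NOBDD n d) (ν μ : Fin n → Bool) (l : List (Fin n))
    (h : ∀ j ∈ l, ν (M.ord j) = μ (M.ord j)) (S : Set (Fin d)) :
    l.foldl (nstep M ν) S = l.foldl (nstep M μ) S := by
  induction l generalizing S with
  | nil => rfl
  | cons a l ih =>
    have ha := h a (by simp)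
    simp only [List.foldl_cons]
    rw [ih (fun j hj => h j (by simp [hj]))]
    simp only [nstep, ha]

theorem reach_split {n d : ℕ} (M : NOBDD n d) (ν : Fin n → Bool) (t : ℕ) (w : Fin d) :
    w ∈ M.reach ν ↔ ∃ v ∈ ((List.finRange n).take t).foldl (nstep M ν) {M.start},
      w ∈ ((List.finRange n).drop t).foldl (nstep M ν) {v} := by
  rw [← mem_foldl_nstep, ← List.foldl_append, List.take_append_drop]
  rfl

theorem nobdd_fooling {n d : ℕ} (M : NOBDD n d) (f : (Fin n → Bool) → Bool)
    (hM : M.computes f) {X : Type} [Fintype X] (t : ℕ) (ν : X → X → Fin n → Bool)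
    (hl : ∀ x y y' i, (M.ord.symm i : ℕ) < t → ν x y i = ν x y' i)
    (hr : ∀ x x' y i, ¬ (M.ord.symm i : ℕ) < t → ν x y i = ν x' y i)
    (hf : ∀ x y, f (ν x y) = true ↔ x = y) : Fintype.card X ≤ d := by
  have key : ∀ x, ∃ v, v ∈ ((List.finRange n).take t).foldl (nstep M (ν x x)) {M.start} ∧
      ∃ w ∈ M.Accept, w ∈ ((List.finRange n).drop t).foldl (nstep M (ν x x)) {v} := by
    intro x
    obtain ⟨w, hw, hA⟩ := (hM (ν x x)).2 ((hf x x).2 rfl)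
    obtain ⟨v, hv, hw⟩ := (reach_split M _ t w).1 hw
    exact ⟨v, hv, w, hA, hw⟩
  choose g hg1 hg2 using key
  have hinj : Function.Injective g := by
    intro x y hxy
    obtain ⟨w, hA, hw⟩ := hg2 y
    rw [← hf]
    refine (hM _).1 ⟨w, (reach_split M _ t w).2 ⟨g x, ?_, ?_⟩, hA⟩
    · rw [foldl_nstep_congr M (ν x y) (ν x x)]
      · exact hg1 x
      · intro j hj
        apply hl
        obtain ⟨i, hi, rfl⟩ := List.mem_take_iff_getElem.1 hj
        simp at hi ⊢
        omega
    · rw [foldl_nstep_congr M (ν x y) (ν y y), hxy]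
      · exact hw
      · intro j hj
        apply hr
        obtain ⟨i, hi, rfl⟩ := List.mem_drop_iff_getElem.1 hj
        simp
  simpa using Fintype.card_le_of_injective g hinj

/-- A deterministic OBDD seen as a nondeterministic one. -/
def DOBDD.toN {n d : ℕ} (M : DOBDD n d) : NOBDD n d where
  ord := M.ord
  T j b v := {M.T j b v}
  start := M.start
  Accept := M.Accept

theorem DOBDD.toN_foldl {n d : ℕ} (M : DOBDD n d) (ν : Fin n → Bool) (l : List (Fin n))
    (s : Fin d) : l.foldl (nstep M.toN ν) {s}
      = {l.foldl (fun v j => M.T j (ν (M.ord j)) v) s} := by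
  induction l generalizing s with
  | nil => rfl
  | cons a l ih =>
    simp only [List.foldl_cons]
    rw [← ih]
    congr 1
    ext w
    simp [nstep, DOBDD.toN]

theorem DOBDD.toN_computes {n d : ℕ} (M : DOBDD n d) (f : (Fin n → Bool) → Bool)
    (h : M.computes f) : M.toN.computes f := by
  intro ν
  rw [← h ν]
  have : M.toN.reach ν = {M.run ν} := M.toN_foldl ν (List.finRange n) M.start
  unfold NOBDD.accepts DOBDD.accepts
  rw [this]
  simp [DOBDD.toN]

/-- The fooling input. -/
def foolInput {n : ℕ} (p : ℕ → Prop) [DecidablePred p] (x y : ℕ → Bool) (i : Fin n) : Bool :=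
  if (i : ℕ) % 2 = 0 then !decide (p (i / 2))
  else if p (i / 2) then x (Nat.count p (i / 2)) else y (Nat.count (fun j => ¬ p j) (i / 2))

theorem foolInput_false {n k : ℕ} (hkn : k ≤ n) (p : ℕ → Prop) [DecidablePred p]
    (x y : ℕ → Bool) :
    valueSubseq k false (foolInput (n := n) p x y)
      = (List.range (Nat.count p (k / 2))).map x := by
  rw [← filterMap_count_aux]
  apply List.filterMap_congr
  intro j hj
  have hj : j < k / 2 := by simpa using hj
  have h2 : (2 * j + 1) / 2 = j := by omega
  have h1 : 2 * j + 1 < n := by omega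
  by_cases h : p j <;> simp [foolInput, h, h1, h2]

theorem foolInput_true {n k : ℕ} (hkn : k ≤ n) (p : ℕ → Prop) [DecidablePred p]
    (x y : ℕ → Bool) :
    valueSubseq k true (foolInput (n := n) p x y)
      = (List.range (Nat.count (fun j => ¬ p j) (k / 2))).map y := by
  rw [← filterMap_count_aux]
  apply List.filterMap_congr
  intro j hj
  have hj : j < k / 2 := by simpa using hj
  have h2 : (2 * j + 1) / 2 = j := by omega
  have h1 : 2 * j + 1 < n := by omega
  by_cases h : p j <;> simp [foolInput, h, h1, h2]

/-- Value bit `j` is read before time `t`. -/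
def readBefore {n : ℕ} (σ : Equiv.Perm (Fin n)) (t j : ℕ) : Prop :=
  ∃ h : 2 * j + 1 < n, (σ.symm ⟨2 * j + 1, h⟩ : ℕ) < t

open Classical in
theorem exists_cut {n : ℕ} (σ : Equiv.Perm (Fin n)) (K m : ℕ) (hK : 2 * K ≤ n) (hm : m ≤ K) :
    ∃ t, Nat.count (readBefore σ t) K = m := by
  apply discrete_ivt_aux _ n
  · rw [Nat.count_eq_card_filter_range, Finset.card_eq_zero]
    simp [readBefore]
  · rw [Nat.count_eq_card_filter_range, Finset.filter_true_of_mem]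
    · simpa using hm
    · intro j hj
      have hj : j < K := by simpa using hj
      exact ⟨by omega, Fin.is_lt _⟩
  · intro t
    simp only [Nat.count_eq_card_filter_range]
    have hsub : (Finset.range K).filter (readBefore σ (t + 1)) ⊆
        (Finset.range K).filter (readBefore σ t) ∪
        (Finset.range K).filter (fun j => ∃ h : 2 * j + 1 < n, (σ.symm ⟨2 * j + 1, h⟩ : ℕ) = t) := by
      intro j hj
      simp only [Finset.mem_union, Finset.mem_filter, readBefore] at hj ⊢
      obtain ⟨h1, h2, h3⟩ := hj
      rcases Nat.lt_succ_iff_lt_or_eq.1 h3 with h | h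
      · exact Or.inl ⟨h1, h2, h⟩
      · exact Or.inr ⟨h1, h2, h⟩
    refine (Finset.card_le_card hsub).trans ((Finset.card_union_le _ _).trans ?_)
    gcongr
    rw [Finset.card_le_one]
    intro a ha b hb
    simp only [Finset.mem_filter] at ha hb
    obtain ⟨-, h1, h2⟩ := ha
    obtain ⟨-, h3, h4⟩ := hb
    have := σ.symm.injective (Fin.ext (h2.trans h4.symm))
    simp at this
    exact this

open Classical in
theorem nobdd_EQS_bound (n k d : ℕ) (hk : 4 ∣ k) (hkn : k ≤ n) (M : NOBDD n d)
    (hM : M.computes (EQS n k)) : 2 ^ (k / 4) ≤ d := by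
  obtain ⟨m, rfl⟩ := hk
  have e4 : 4 * m / 4 = m := by omega
  have e2 : 4 * m / 2 = 2 * m := by omega
  obtain ⟨t, ht⟩ := exists_cut M.ord (2 * m) m (by omega) (by omega)
  have ht' := count_not_aux (readBefore M.ord t) (2 * m)
  rw [e4]
  let ext : (Fin m → Bool) → ℕ → Bool := fun x i => if h : i < m then x ⟨i, h⟩ else false
  have hp : ∀ i : Fin n, (i : ℕ) % 2 ≠ 0 →
      (readBefore M.ord t (i / 2) ↔ (M.ord.symm i : ℕ) < t) := by
    intro i hi
    have e : 2 * ((i : ℕ) / 2) + 1 = i := by omega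
    simp [readBefore, e]
  have := nobdd_fooling M _ hM (X := Fin m → Bool) t
    (fun x y => foolInput (readBefore M.ord t) (ext x) (ext y)) ?_ ?_ ?_
  · simpa using this
  · intro x y y' i hi
    by_cases h : (i : ℕ) % 2 = 0
    · simp [foolInput, h]
    · simp [foolInput, h, (hp i h).2 hi]
  · intro x x' y i hi
    by_cases h : (i : ℕ) % 2 = 0
    · simp [foolInput, h]
    · simp [foolInput, h, (hp i h).not.2 hi]
  · intro x y
    have hc : Nat.count (fun j => ¬ readBefore M.ord t j) (2 * m) = m := by omega
    rw [EQS, decide_eq_true_iff, foolInput_false hkn, foolInput_true hkn, e2, ht, hc]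
    constructor
    · intro h
      rw [List.map_inj_left] at h
      ext i
      have := h i (by simp)
      simpa [ext] using this
    · rintro rfl
      rfl

/-- For every `k` a multiple of 4 with `k ≥ 4`, there are infinitely many `n` such that
any deterministic OBDD and any nondeterministic OBDD computing `EQS^k_n` has width at
least `2^{k/4}`. -/
theorem EQS_lower_bound (k : ℕ) (hk : 4 ∣ k) (h1 : 4 ≤ k) :
    ∀ N : ℕ, ∃ n, N ≤ n ∧ k ≤ n ∧
      (∀ (d : ℕ) (M : DOBDD n d), M.computes (EQS n k) → 2 ^ (k / 4) ≤ d) ∧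
      (∀ (d : ℕ) (M : NOBDD n d), M.computes (EQS n k) → 2 ^ (k / 4) ≤ d) := by
  intro N
  have hb : k ≤ N + k := by omega
  exact ⟨N + k, by omega, hb,
    fun d M hM => nobdd_EQS_bound _ k d hk hb M.toN (M.toN_computes _ hM),
    fun d M hM => nobdd_EQS_bound _ k d hk hb M hM⟩
end
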